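/- arXiv:1710.08353 — 5 statements merged into one kernel-verified Lean document; each statement's English description precedes it below -/
import Mathlib

section
/- Let k ≥ 2 be an integer and let S ⊆ ℕ be a k-automatic set with gcd(S) = 1 such that a deterministic finite automaton with m states accepts the language of base-k expansions of the elements of S. Then there exist distinct integers s_1, s_2, …, s_ℓ ∈ S, all less than k^{2m+2}, such that gcd(s_1, s_2, …, s_ℓ) = 1; equivalently, the gcd of the elements of S that are less than k^{2m+2} equals 1. -/
/-- `n` can be written as a sum of at least one and at most `N` elements of `S`
(repetitions allowed). -/
def SumOfAtMost (S : Set ℕ) (N n : ℕ) : Prop :=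
  ∃ l : List ℕ, l ≠ [] ∧ l.length ≤ N ∧ (∀ x ∈ l, x ∈ S) ∧ l.sum = n

/-- `π_S(x) = #{n ≤ x : n ∈ S}`. -/
noncomputable def piCount (S : Set ℕ) (x : ℕ) : ℕ :=
  Set.ncard {n | n ∈ S ∧ n ≤ x}

/-- `S` is sparse if `π_S(x) = O((log x)^d)` for some natural number `d`. -/
def IsSparse (S : Set ℕ) : Prop :=
  ∃ d : ℕ, ∃ C : ℝ, 0 < C ∧ ∃ x0 : ℕ, ∀ x : ℕ, x0 ≤ x →
    (piCount S x : ℝ) ≤ C * (Real.log x) ^ d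

/-- `S ⊆ ℕ` is `k`-automatic: some DFA over the alphabet `{0, …, k-1}` accepts exactly
the base-`k` expansions (least-significant digit first, without leading zeros)
of the elements of `S`. -/
def IsKAutomatic (k : ℕ) (S : Set ℕ) : Prop :=
  ∃ (m : ℕ) (M : DFA (Fin k) (Fin m)),
    ∀ w : List (Fin k), w ∈ M.accepts ↔ ∃ s ∈ S, w.map Fin.val = Nat.digits k s


open Classical in
/-- Value of an accepted word modulo `p`, and `0` for a rejected word. -/
noncomputable def wordVal (k m p : ℕ) (M : DFA (Fin k) (Fin m)) (w : List (Fin k)) : ZMod p :=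
  if w ∈ M.accepts then ((Nat.ofDigits k (w.map Fin.val) : ℕ) : ZMod p) else 0

open Classical in
lemma wordVal_append (k m p : ℕ) (M : DFA (Fin k) (Fin m)) (x r : List (Fin k)) :
    wordVal k m p M (x ++ r) = ∑ q : Fin m,
      (if M.evalFrom q r ∈ M.accept then (1 : ZMod p) else 0) *
        ((if q = M.eval x then ((Nat.ofDigits k (x.map Fin.val) : ℕ) : ZMod p) else 0) +
          (if q = M.eval x then (k : ZMod p) ^ x.length else 0) *
            ((Nat.ofDigits k (r.map Fin.val) : ℕ) : ZMod p)) := by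
  rw [Finset.sum_eq_single (M.eval x)]
  · have h : (x ++ r ∈ M.accepts) ↔ M.evalFrom (M.eval x) r ∈ M.accept := by
      rw [DFA.mem_accepts, DFA.eval, DFA.evalFrom_of_append]
    unfold wordVal
    simp only [h]
    split_ifs <;> simp [Nat.ofDigits_append]
  · intro b _ hb
    simp [hb]
  · simp

lemma wordVal_zero (k m p : ℕ) [Fact p.Prime] (M : DFA (Fin k) (Fin m))
    (hshort : ∀ w : List (Fin k), w.length ≤ 2 * m → wordVal k m p M w = 0) :
    ∀ (n : ℕ) (w : List (Fin k)), w.length = n → wordVal k m p M w = 0 := by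
  classical
  intro n
  induction n using Nat.strong_induction_on with
  | _ n ih =>
  intro w hw
  by_cases hn : n ≤ 2 * m
  · exact hshort w (hw ▸ hn)
  push Not at hn
  let u : Fin (2 * m + 1) → (Fin m ⊕ Fin m → ZMod p) := fun i =>
    Sum.elim
      (fun q => if q = M.eval (w.take i) then
        ((Nat.ofDigits k ((w.take i).map Fin.val) : ℕ) : ZMod p) else 0)
      (fun q => if q = M.eval (w.take i) then (k : ZMod p) ^ (w.take i).length else 0)
  have hdep : ¬ LinearIndependent (ZMod p) u := by
    intro h
    have := h.fintype_card_le_finrank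
    simp at this
    omega
  rw [Fintype.not_linearIndependent_iff] at hdep
  obtain ⟨g, hg, i0, hi0⟩ := hdep
  obtain ⟨j, hj, hmax⟩ := Finset.exists_max_image
    (Finset.univ.filter fun i => g i ≠ 0) id ⟨i0, by simpa using hi0⟩
  simp only [Finset.mem_filter, Finset.mem_univ, true_and, id] at hj hmax
  have hsum : ∀ r : List (Fin k), ∑ i, g i * wordVal k m p M (w.take i ++ r) = 0 := by
    intro r
    simp only [wordVal_append, Finset.mul_sum]
    rw [Finset.sum_comm]
    refine Finset.sum_eq_zero fun q _ => ?_
    have h1 := congrFun hg (Sum.inl q)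
    have h2 := congrFun hg (Sum.inr q)
    simp only [Finset.sum_apply, Pi.smul_apply, smul_eq_mul, u, Sum.elim_inl, Sum.elim_inr,
      Pi.zero_apply] at h1 h2
    have h3 : ∀ (c R : ZMod p) (A B : Fin (2 * m + 1) → ZMod p), ∑ i, g i * A i = 0 →
        ∑ i, g i * B i = 0 → ∑ i, g i * (c * (A i + B i * R)) = 0 := by
      intro c R A B hA hB
      have : ∀ i, g i * (c * (A i + B i * R)) = c * (g i * A i) + c * R * (g i * B i) := by
        intro i; ring
      simp only [this, Finset.sum_add_distrib, ← Finset.mul_sum, hA, hB]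
      ring
    exact h3 _ _ _ _ h1 h2
  have hs := hsum (w.drop j)
  rw [Finset.sum_eq_single j] at hs
  · rw [List.take_append_drop] at hs
    exact (mul_eq_zero.mp hs).resolve_left hj
  · intro i _ hij
    by_cases hgi : g i = 0
    · simp [hgi]
    have hlt : i < j := lt_of_le_of_ne (hmax i hgi) hij
    have hlt' : (i : ℕ) < j := hlt
    have hj2 := j.2
    rw [ih _ _ _ rfl, mul_zero]
    simp only [List.length_append, List.length_take, List.length_drop]
    omega
  · simp

/-- If `S` is a `k`-automatic set with `gcd(S) = 1` accepted (via base-`k` expansions)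
by a DFA with `m` states, then there are finitely many distinct elements of `S`, all
less than `k^(2m+2)`, whose gcd is `1`. -/
theorem gcd_one_small_witnesses
    (k m : ℕ) (hk : 2 ≤ k) (S : Set ℕ)
    (hgcd : ∀ d : ℕ, (∀ n ∈ S, d ∣ n) → d = 1)
    (M : DFA (Fin k) (Fin m))
    (hM : ∀ w : List (Fin k), w ∈ M.accepts ↔ ∃ s ∈ S, w.map Fin.val = Nat.digits k s) :
    ∃ F : Finset ℕ, ↑F ⊆ S ∧ (∀ x ∈ F, x < k ^ (2 * m + 2)) ∧ F.gcd id = 1 := by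
  classical
  have hfin : (S ∩ {x | x < k ^ (2 * m + 2)}).Finite :=
    (Set.finite_lt_nat _).subset Set.inter_subset_right
  refine ⟨hfin.toFinset, by simp, by simp, ?_⟩
  by_contra hne
  obtain ⟨p, hp, hpd⟩ := Nat.exists_prime_and_dvd hne
  haveI : Fact p.Prime := ⟨hp⟩
  refine hp.one_lt.ne' (hgcd p ?_)
  have hsmall : ∀ s ∈ S, s < k ^ (2 * m + 2) → p ∣ s := by
    intro s hs hlt
    exact hpd.trans (Finset.gcd_dvd (f := id) (by simp [hs, hlt]))
  have hall := wordVal_zero k m p M (by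
    intro w hw
    unfold wordVal
    split_ifs with hacc
    · obtain ⟨s, hs, hws⟩ := (hM w).1 hacc
      rw [hws, Nat.ofDigits_digits, ZMod.natCast_eq_zero_iff]
      apply hsmall s hs
      refine (Nat.lt_base_pow_length_digits (m := s) (show 1 < k by omega)).trans_le ?_
      rw [← hws, List.length_map]
      exact Nat.pow_le_pow_right (by omega) (by omega)
    · rfl)
  intro s hs
  obtain ⟨w, hw⟩ : ∃ w : List (Fin k), w.map Fin.val = Nat.digits k s := by
    have hd : ∀ d ∈ Nat.digits k s, d < k := fun d hd => Nat.digits_lt_base (by omega) hd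
    refine ⟨(Nat.digits k s).pmap (fun d h => (⟨d, h⟩ : Fin k)) hd, ?_⟩
    simp [List.map_pmap]
  have h := hall _ w rfl
  rw [wordVal, if_pos ((hM w).2 ⟨s, hs, hw⟩), hw, Nat.ofDigits_digits,
    ZMod.natCast_eq_zero_iff] at h
  exact h
end

section
/- Let 𝒞 be the set of natural numbers (including 0) whose base-3 expansions consist only of the digits 0 and 2. Then every even natural number N can be written as N = a + b with a, b ∈ 𝒞. -/
/-- The Cantor numbers: natural numbers whose base-3 expansion uses only the
digits 0 and 2. -/
def CantorNumbers : Set ℕ :=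
  {n : ℕ | ∀ d ∈ Nat.digits 3 n, d = 0 ∨ d = 2}

theorem cantor_step (a d : ℕ) (ha : a ∈ CantorNumbers) (hd : d = 0 ∨ d = 2) :
    3 * a + d ∈ CantorNumbers := by
  intro e he
  by_cases h0 : 3 * a + d = 0
  · rw [h0] at he
    simp at he
  · rw [Nat.digits_def' (by norm_num) (Nat.pos_of_ne_zero h0)] at he
    have h1 : (3 * a + d) % 3 = d := by omega
    have h2 : (3 * a + d) / 3 = a := by omega
    rw [h1, h2, List.mem_cons] at he
    rcases he with rfl | he
    · exact hd
    · exact ha e he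

theorem cantor_aux (m : ℕ) :
    ∃ a ∈ CantorNumbers, ∃ b ∈ CantorNumbers, m + m = a + b := by
  induction m using Nat.strong_induction_on with
  | _ m ih =>
    by_cases hm : m = 0
    · exact ⟨0, by simp [CantorNumbers], 0, by simp [CantorNumbers], by omega⟩
    · obtain ⟨a, ha, b, hb, h⟩ := ih (m / 3) (by omega)
      have hr : m % 3 = 0 ∨ m % 3 = 1 ∨ m % 3 = 2 := by omega
      rcases hr with hr | hr | hr
      · exact ⟨_, cantor_step a 0 ha (by simp), _, cantor_step b 0 hb (by simp), by omega⟩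
      · exact ⟨_, cantor_step a 2 ha (by simp), _, cantor_step b 0 hb (by simp), by omega⟩
      · exact ⟨_, cantor_step a 2 ha (by simp), _, cantor_step b 2 hb (by simp), by omega⟩

/-- Every even natural number is the sum of two Cantor numbers. -/
theorem even_eq_sum_two_cantor (N : ℕ) (hN : Even N) :
    ∃ a ∈ CantorNumbers, ∃ b ∈ CantorNumbers, N = a + b := by
  obtain ⟨m, rfl⟩ := hN
  exact cantor_aux m
end

section
/- Let ℰ be the set of natural numbers (including 0) whose binary digit sum is even. Then a natural number N can be written as N = a + b + c with a, b, c ∈ ℰ if and only if N ∉ {1, 2, 4, 7}. -/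
/-- The evil numbers: natural numbers whose binary digit sum is even. -/
def EvilNumbers : Set ℕ :=
  {n : ℕ | Even (Nat.digits 2 n).sum}

lemma evil_zero : (0:ℕ) ∈ EvilNumbers := by simp [EvilNumbers]

lemma evil_two_mul (n : ℕ) : 2 * n ∈ EvilNumbers ↔ n ∈ EvilNumbers := by
  rcases Nat.eq_zero_or_pos n with rfl | h
  · simp
  · simp only [EvilNumbers, Set.mem_setOf_eq]
    rw [Nat.digits_base_mul (by norm_num) h]
    simp

lemma evil_two_mul_add_one (n : ℕ) : 2 * n + 1 ∈ EvilNumbers ↔ n ∉ EvilNumbers := by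
  simp only [EvilNumbers, Set.mem_setOf_eq]
  rw [add_comm, Nat.digits_add 2 (by norm_num) 1 n (by norm_num) (Or.inl (by norm_num))]
  rw [List.sum_cons, add_comm, Nat.even_add_one]

/-- `N` is a sum of three evil numbers, and also of one non-evil and two evil numbers. -/
def BothPatterns (N : ℕ) : Prop :=
  (∃ a ∈ EvilNumbers, ∃ b ∈ EvilNumbers, ∃ c ∈ EvilNumbers, N = a + b + c) ∧
  (∃ a, a ∉ EvilNumbers ∧ ∃ b ∈ EvilNumbers, ∃ c ∈ EvilNumbers, N = a + b + c)

lemma both_even {N : ℕ} (h : BothPatterns N) : BothPatterns (2 * N) := by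
  obtain ⟨⟨a, ha, b, hb, c, hc, h1⟩, ⟨a', ha', b', hb', c', hc', h2⟩⟩ := h
  exact ⟨⟨2 * a, (evil_two_mul a).2 ha, 2 * b, (evil_two_mul b).2 hb, 2 * c,
      (evil_two_mul c).2 hc, by omega⟩,
    ⟨2 * a', fun h => ha' ((evil_two_mul a').1 h), 2 * b', (evil_two_mul b').2 hb', 2 * c',
      (evil_two_mul c').2 hc', by omega⟩⟩

lemma both_odd {N : ℕ} (h : BothPatterns N) : BothPatterns (2 * N + 1) := by
  obtain ⟨⟨a, ha, b, hb, c, hc, h1⟩, ⟨a', ha', b', hb', c', hc', h2⟩⟩ := h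
  exact ⟨⟨2 * a' + 1, (evil_two_mul_add_one a').2 ha', 2 * b', (evil_two_mul b').2 hb', 2 * c',
      (evil_two_mul c').2 hc', by omega⟩,
    ⟨2 * a + 1, fun h => (evil_two_mul_add_one a).1 h ha, 2 * b, (evil_two_mul b).2 hb, 2 * c,
      (evil_two_mul c).2 hc, by omega⟩⟩

lemma both_of_le (N : ℕ) (hN : 8 ≤ N) : BothPatterns N := by
  induction N using Nat.strong_induction_on with
  | _ N ih =>
    by_cases h : 16 ≤ N
    · rcases Nat.even_or_odd' N with ⟨k, rfl | rfl⟩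
      · exact both_even (ih k (by omega) (by omega))
      · exact both_odd (ih k (by omega) (by omega))
    · have hlt : N < 16 := by omega
      clear ih h
      interval_cases N
      · exact ⟨⟨0, by simp +decide [EvilNumbers], 3, by simp +decide [EvilNumbers], 5, by simp +decide [EvilNumbers], by norm_num⟩,
          ⟨2, by simp +decide [EvilNumbers], 0, by simp +decide [EvilNumbers], 6, by simp +decide [EvilNumbers], by norm_num⟩⟩
      · exact ⟨⟨0, by simp +decide [EvilNumbers], 0, by simp +decide [EvilNumbers], 9, by simp +decide [EvilNumbers], by norm_num⟩,
          ⟨1, by simp +decide [EvilNumbers], 3, by simp +decide [EvilNumbers], 5, by simp +decide [EvilNumbers], by norm_num⟩⟩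
      · exact ⟨⟨0, by simp +decide [EvilNumbers], 0, by simp +decide [EvilNumbers], 10, by simp +decide [EvilNumbers], by norm_num⟩,
          ⟨1, by simp +decide [EvilNumbers], 0, by simp +decide [EvilNumbers], 9, by simp +decide [EvilNumbers], by norm_num⟩⟩
      · exact ⟨⟨0, by simp +decide [EvilNumbers], 5, by simp +decide [EvilNumbers], 6, by simp +decide [EvilNumbers], by norm_num⟩,
          ⟨1, by simp +decide [EvilNumbers], 0, by simp +decide [EvilNumbers], 10, by simp +decide [EvilNumbers], by norm_num⟩⟩
      · exact ⟨⟨0, by simp +decide [EvilNumbers], 0, by simp +decide [EvilNumbers], 12, by simp +decide [EvilNumbers], by norm_num⟩,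
          ⟨1, by simp +decide [EvilNumbers], 5, by simp +decide [EvilNumbers], 6, by simp +decide [EvilNumbers], by norm_num⟩⟩
      · exact ⟨⟨0, by simp +decide [EvilNumbers], 3, by simp +decide [EvilNumbers], 10, by simp +decide [EvilNumbers], by norm_num⟩,
          ⟨1, by simp +decide [EvilNumbers], 0, by simp +decide [EvilNumbers], 12, by simp +decide [EvilNumbers], by norm_num⟩⟩
      · exact ⟨⟨0, by simp +decide [EvilNumbers], 5, by simp +decide [EvilNumbers], 9, by simp +decide [EvilNumbers], by norm_num⟩,
          ⟨1, by simp +decide [EvilNumbers], 3, by simp +decide [EvilNumbers], 10, by simp +decide [EvilNumbers], by norm_num⟩⟩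
      · exact ⟨⟨0, by simp +decide [EvilNumbers], 0, by simp +decide [EvilNumbers], 15, by simp +decide [EvilNumbers], by norm_num⟩,
          ⟨1, by simp +decide [EvilNumbers], 5, by simp +decide [EvilNumbers], 9, by simp +decide [EvilNumbers], by norm_num⟩⟩

/-- A natural number is the sum of three evil numbers if and only if it is not in
`{1, 2, 4, 7}`. -/
theorem sum_three_evil_iff (N : ℕ) :
    (∃ a ∈ EvilNumbers, ∃ b ∈ EvilNumbers, ∃ c ∈ EvilNumbers, N = a + b + c) ↔
      (N ≠ 1 ∧ N ≠ 2 ∧ N ≠ 4 ∧ N ≠ 7) := by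
  constructor
  · rintro ⟨a, ha, b, hb, c, hc, rfl⟩
    have key : ∀ n ∈ EvilNumbers, n = 0 ∨ n = 3 ∨ n = 5 ∨ n = 6 ∨ 8 ≤ n := by
      intro n hn
      by_contra hcon
      have hlt : n < 8 := by omega
      interval_cases n <;> simp +decide [EvilNumbers] at hn hcon
    have := key a ha
    have := key b hb
    have := key c hc
    omega
  · rintro ⟨h1, h2, h4, h7⟩
    by_cases h : 8 ≤ N
    · exact (both_of_le N h).1
    · have hN : N = 0 ∨ N = 3 ∨ N = 5 ∨ N = 6 := by omega
      refine ⟨N, ?_, 0, evil_zero, 0, evil_zero, rfl⟩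
      rcases hN with rfl | rfl | rfl | rfl <;> simp +decide [EvilNumbers]
end

section
/- Let ℛ be the set of natural numbers n such that the number of indices i ≥ 0 for which both bit i and bit i+1 of the binary expansion of n equal 1 is odd (i.e., the Golay–Rudin–Shapiro function r(n) equals −1). Then a natural number N can be written as N = a + b with a, b ∈ ℛ if and only if N ∉ {0, 1, 2, 3, 4, 5, 7, 8, 10, 11, 13, 20}. -/
/-- `e(n)`: the number of indices `i ≥ 0` such that bits `i` and `i+1` of the binary
expansion of `n` are both `1` (occurrences of the block `11`). -/
def elevenCount (n : ℕ) : ℕ :=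
  ((Finset.range n).filter (fun i => n.testBit i ∧ n.testBit (i + 1))).card

/-- The Golay–Rudin–Shapiro set: natural numbers `n` with `r(n) = -1`, i.e. with an
odd number of occurrences of the block `11` in the binary expansion. -/
def RudinShapiroSet : Set ℕ :=
  {n : ℕ | Odd (elevenCount n)}

/-- The sum form of the block count, with an arbitrary range. -/
def blockSum (n m : ℕ) : ℕ :=
  ∑ i ∈ Finset.range m, if (n.testBit i ∧ n.testBit (i + 1)) then 1 else 0

theorem elevenCount_eq (n m : ℕ) (h : n ≤ m) : elevenCount n = blockSum n m := by
  unfold elevenCount blockSum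
  rw [Finset.card_filter]
  apply Finset.sum_subset
  · intro i hi
    simp only [Finset.mem_range] at *
    omega
  · intro i _ hi
    have hi' : n ≤ i := by simpa using hi
    have : n.testBit i = false :=
      Nat.testBit_lt_two_pow (lt_of_le_of_lt hi' Nat.lt_two_pow_self)
    simp [this]

theorem elevenCount_even (n : ℕ) : elevenCount (2 * n) = elevenCount n := by
  rw [elevenCount_eq (2 * n) (2 * n + 1) (by omega), elevenCount_eq n (2 * n) (by omega)]
  unfold blockSum
  rw [Finset.sum_range_succ']
  simp [Nat.testBit_succ]

theorem elevenCount_odd (n : ℕ) : elevenCount (2 * n + 1) = elevenCount n + n % 2 := by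
  rw [elevenCount_eq (2 * n + 1) (2 * n + 1) (by omega), elevenCount_eq n (2 * n) (by omega)]
  unfold blockSum
  rw [Finset.sum_range_succ']
  have h : ∀ i, (2 * n + 1).testBit (i + 1) = n.testBit i := by
    intro i
    rw [Nat.testBit_succ]
    congr 1
    omega
  have h0 : (2 * n + 1).testBit 0 = true := by simp [Nat.testBit_zero]
  simp only [h, h0, Nat.testBit_zero]
  rcases Nat.mod_two_eq_zero_or_one n with h2 | h2 <;> simp [h2]

/-- Parity of the block count. -/
def rsBit (n : ℕ) : Bool := decide (elevenCount n % 2 = 1)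

theorem rsBit_even (n : ℕ) : rsBit (2 * n) = rsBit n := by
  unfold rsBit
  rw [elevenCount_even]

theorem rsBit_odd (n : ℕ) : rsBit (2 * n + 1) = xor (rsBit n) (n % 2 == 1) := by
  unfold rsBit
  rw [elevenCount_odd]
  rcases Nat.mod_two_eq_zero_or_one n with h2 | h2 <;>
  rcases Nat.mod_two_eq_zero_or_one (elevenCount n) with h3 | h3 <;>
  simp [h2, h3, Nat.add_mod]

/-- Fast version of the parity, valid for `n < 2 ^ k`. -/
def rsFast : ℕ → ℕ → Bool
  | 0, _ => false
  | k + 1, n => xor (rsFast k (n / 2)) (n % 4 == 3)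

theorem rsFast_eq (k n : ℕ) (h : n < 2 ^ k) : rsFast k n = rsBit n := by
  induction k generalizing n with
  | zero =>
    have : n = 0 := by simpa using h
    subst this
    rfl
  | succ k ih =>
    have h1 : n / 2 < 2 ^ k := by rw [pow_succ] at h; omega
    rw [rsFast, ih _ h1]
    rcases Nat.even_or_odd' n with ⟨c, rfl | rfl⟩
    · rw [rsBit_even]
      have e1 : 2 * c / 2 = c := by omega
      have e2 : (2 * c % 4 == 3) = false := by
        rw [beq_eq_false_iff_ne]
        omega
      rw [e1, e2, Bool.xor_false]
    · rw [rsBit_odd]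
      have e1 : (2 * c + 1) / 2 = c := by omega
      have e2 : (2 * c + 1) % 4 = 3 ↔ c % 2 = 1 := by omega
      rw [e1]
      congr 1
      rw [Bool.eq_iff_iff]
      simpa using e2

/-- All parity-compatible types of decompositions of `N` occur. -/
def FullType (N : ℕ) : Prop :=
  ∀ x < 2, ∀ g h : Bool, ∃ a b, a + b = N ∧ a % 2 = x ∧ rsBit a = g ∧ rsBit b = h

theorem full_base_check : ∀ d < 45, ∀ x < 2, ∀ g h : Bool, ∃ a < d + 44,
    a % 2 = x ∧ rsFast 7 a = g ∧ rsFast 7 (d + 43 - a) = h := by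
  decide +kernel

theorem full_all (N : ℕ) (hN : 43 ≤ N) : FullType N := by
  induction N using Nat.strong_induction_on with
  | _ N ih =>
    by_cases hs : N < 88
    · intro x hx g h
      obtain ⟨a, ha, h1, h2, h3⟩ := full_base_check (N - 43) (by omega) x hx g h
      rw [rsFast_eq _ _ (by norm_num; omega)] at h2 h3
      refine ⟨a, _, ?_, h1, h2, h3⟩
      omega
    · intro x hx g h
      rcases Nat.even_or_odd' N with ⟨M, rfl | rfl⟩
      · interval_cases x
        · obtain ⟨a, b, hab, -, h2, h3⟩ := ih M (by omega) (by omega) 0 (by omega) g h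
          exact ⟨2 * a, 2 * b, by omega, by omega, by rw [rsBit_even, h2],
            by rw [rsBit_even, h3]⟩
        · obtain ⟨a, b, hab, h1, h2, h3⟩ := ih (M - 1) (by omega) (by omega) 0 (by omega) g
            (xor h ((M - 1) % 2 == 1))
          have hb : b % 2 = (M - 1) % 2 := by omega
          exact ⟨2 * a + 1, 2 * b + 1, by omega, by omega, by rw [rsBit_odd, h2, h1]; simp,
            by rw [rsBit_odd, h3, hb]; simp⟩
      · interval_cases x
        · obtain ⟨a, b, hab, h1, h2, h3⟩ := ih M (by omega) (by omega) 0 (by omega) g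
            (xor h (M % 2 == 1))
          have hb : b % 2 = M % 2 := by omega
          exact ⟨2 * a, 2 * b + 1, by omega, by omega, by rw [rsBit_even, h2],
            by rw [rsBit_odd, h3, hb]; simp⟩
        · obtain ⟨a, b, hab, h1, h2, h3⟩ := ih M (by omega) (by omega) 0 (by omega) g h
          exact ⟨2 * a + 1, 2 * b, by omega, by omega, by rw [rsBit_odd, h2, h1]; simp,
            by rw [rsBit_even, h3]⟩

theorem mem_iff_rsBit (n : ℕ) : n ∈ RudinShapiroSet ↔ rsBit n = true := by
  simp [RudinShapiroSet, rsBit, Nat.odd_iff]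

theorem small_check : ∀ N < 43, (∃ a < N + 1, rsFast 6 a = true ∧ rsFast 6 (N - a) = true) ↔
    ¬ (N = 0 ∨ N = 1 ∨ N = 2 ∨ N = 3 ∨ N = 4 ∨ N = 5 ∨ N = 7 ∨ N = 8 ∨ N = 10 ∨ N = 11 ∨
      N = 13 ∨ N = 20) := by
  decide +kernel

/-- A natural number is the sum of two elements of `ℛ` if and only if it is not in
`{0, 1, 2, 3, 4, 5, 7, 8, 10, 11, 13, 20}`. -/
theorem sum_two_rudinShapiro_iff (N : ℕ) :
    (∃ a ∈ RudinShapiroSet, ∃ b ∈ RudinShapiroSet, N = a + b) ↔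
      N ∉ ({0, 1, 2, 3, 4, 5, 7, 8, 10, 11, 13, 20} : Set ℕ) := by
  simp only [mem_iff_rsBit, Set.mem_insert_iff, Set.mem_singleton_iff]
  by_cases hs : N < 43
  · rw [← small_check N hs]
    constructor
    · rintro ⟨a, ha, b, hb, rfl⟩
      refine ⟨a, by omega, ?_, ?_⟩
      · rw [rsFast_eq _ _ (by norm_num; omega), ha]
      · rw [rsFast_eq _ _ (by norm_num; omega), Nat.add_sub_cancel_left, hb]
    · rintro ⟨a, hlt, ha, hb⟩
      rw [rsFast_eq _ _ (by norm_num; omega)] at ha hb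
      exact ⟨a, ha, N - a, hb, by omega⟩
  · obtain ⟨a, b, hab, -, h2, h3⟩ := full_all N (by omega) 0 (by omega) true true
    constructor
    · intro _
      omega
    · intro _
      exact ⟨a, h2, b, h3, hab.symm⟩
end

section
/- Let 𝒟 be the set of natural numbers (including 0) whose base-4 expansions consist only of the digits 0 and 1. Then every natural number N is uniquely representable as N = d_1 + 2·d_2 with d_1, d_2 ∈ 𝒟; that is, for each N ∈ ℕ there exists exactly one pair (d_1, d_2) ∈ 𝒟 × 𝒟 with N = d_1 + 2·d_2. -/
/-- The set of natural numbers whose base-4 expansion uses only the digits 0 and 1. -/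
def BaseFourZeroOne : Set ℕ :=
  {n : ℕ | ∀ d ∈ Nat.digits 4 n, d = 0 ∨ d = 1}

theorem mem_baseFour_iff (n : ℕ) :
    n ∈ BaseFourZeroOne ↔ (n % 4 = 0 ∨ n % 4 = 1) ∧ n / 4 ∈ BaseFourZeroOne := by
  rcases Nat.eq_zero_or_pos n with rfl | hn
  · simp [BaseFourZeroOne]
  · simp only [BaseFourZeroOne, Set.mem_ofPred_eq]
    rw [Nat.digits_def' (by norm_num) hn]
    simp only [List.mem_cons, forall_eq_or_imp]

theorem exists_baseFour (N : ℕ) :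
    ∃ a b : ℕ, a ∈ BaseFourZeroOne ∧ b ∈ BaseFourZeroOne ∧ N = a + 2 * b := by
  induction N using Nat.strong_induction_on with
  | _ N ih =>
    rcases Nat.eq_zero_or_pos N with rfl | hN
    · exact ⟨0, 0, by simp [BaseFourZeroOne], by simp [BaseFourZeroOne], rfl⟩
    · obtain ⟨a, b, ha, hb, h⟩ := ih (N / 4) (by omega)
      refine ⟨4 * a + N % 2, 4 * b + N % 4 / 2, ?_, ?_, by omega⟩
      · rw [mem_baseFour_iff]
        have e : (4 * a + N % 2) / 4 = a := by omega
        exact ⟨by omega, by rw [e]; exact ha⟩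
      · rw [mem_baseFour_iff]
        have e : (4 * b + N % 4 / 2) / 4 = b := by omega
        exact ⟨by omega, by rw [e]; exact hb⟩

theorem unique_baseFour (a : ℕ) : ∀ b c d : ℕ, a ∈ BaseFourZeroOne → b ∈ BaseFourZeroOne →
    c ∈ BaseFourZeroOne → d ∈ BaseFourZeroOne → a + 2 * b = c + 2 * d → a = c ∧ b = d := by
  suffices H : ∀ N a b c d : ℕ, a + 2 * b = N → a ∈ BaseFourZeroOne → b ∈ BaseFourZeroOne →
      c ∈ BaseFourZeroOne → d ∈ BaseFourZeroOne → a + 2 * b = c + 2 * d → a = c ∧ b = d from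
    fun b c d => H _ a b c d rfl
  intro N
  induction N using Nat.strong_induction_on with
  | _ N ih =>
    intro a b c d hN ha hb hc hd h
    rcases Nat.eq_zero_or_pos N with h0 | hpos
    · omega
    · obtain ⟨ha1, ha2⟩ := (mem_baseFour_iff a).1 ha
      obtain ⟨hb1, hb2⟩ := (mem_baseFour_iff b).1 hb
      obtain ⟨hc1, hc2⟩ := (mem_baseFour_iff c).1 hc
      obtain ⟨hd1, hd2⟩ := (mem_baseFour_iff d).1 hd
      have e1 : a % 4 = c % 4 := by omega
      have e2 : b % 4 = d % 4 := by omega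
      have := ih (a / 4 + 2 * (b / 4)) (by omega) _ _ _ _ rfl ha2 hb2 hc2 hd2 (by omega)
      omega

/-- Every natural number `N` is uniquely representable as `N = d₁ + 2·d₂` with
`d₁, d₂ ∈ 𝒟`, where `𝒟` is the set of naturals whose base-4 digits are all 0 or 1. -/
theorem unique_sum_baseFourZeroOne (N : ℕ) :
    ∃! p : ℕ × ℕ, p.1 ∈ BaseFourZeroOne ∧ p.2 ∈ BaseFourZeroOne ∧ N = p.1 + 2 * p.2 := by
  obtain ⟨a, b, ha, hb, h⟩ := exists_baseFour N
  refine ⟨(a, b), ⟨ha, hb, h⟩, ?_⟩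
  rintro ⟨c, d⟩ ⟨hc, hd, h'⟩
  obtain ⟨rfl, rfl⟩ := unique_baseFour c d a b hc hd ha hb (h'.symm.trans h)
  rfl
end
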